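/- Let G be a connected weighted graph on a finite vertex set V with positive edge susceptances and weighted Laplacian L. Partition V into a nonempty set T of terminal vertices and a set I of interior vertices, and write L in block form with blocks L_TT, L_TI, L_IT, L_II. Then L_II is invertible, and the Schur complement L_red = L_TT − L_TI · L_II^{-1} · L_IT (the Kron reduction eliminating all interior vertices) is itself the weighted Laplacian of a graph on T with nonnegative edge weights: L_red is symmetric, every row of L_red sums to zero, and every off-diagonal entry of L_red is nonpositive. -/

import Mathlib

open Matrix

/-- The weighted Laplacian of a graph on the finite vertex set `V` whose edges are
the pairs `{u,v}` with `w u v > 0`, carrying susceptance `w u v`. -/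
def weightedLaplacian {V : Type*} [Fintype V] [DecidableEq V] (w : V → V → ℝ) :
    Matrix V V ℝ :=
  Matrix.of fun u v => if u = v then ∑ x, w u x else -(w u v)

section WeightedLaplacian

variable {V : Type*} [Fintype V] [DecidableEq V] {w : V → V → ℝ}

lemma weightedLaplacian_isSymm (hsym : ∀ u v, w u v = w v u) :
    (weightedLaplacian w).IsSymm := by
  ext u v
  by_cases h : u = v
  · simp [h]
  · simp [weightedLaplacian, h, Ne.symm h, hsym u v]

lemma weightedLaplacian_apply_nonpos (hnonneg : ∀ u v, 0 ≤ w u v) {u v : V} (h : u ≠ v) :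
    weightedLaplacian w u v ≤ 0 := by
  simp [weightedLaplacian, h, hnonneg u v]

lemma weightedLaplacian_mulVec_apply (hdiag : ∀ v, w v v = 0) (x : V → ℝ) (v : V) :
    (weightedLaplacian w *ᵥ x) v = ∑ u, w v u * (x v - x u) := by
  have h : ∀ u, weightedLaplacian w v u * x u =
      (if v = u then (∑ z, w v z) * x u else 0) - w v u * x u := by
    intro u
    by_cases huv : v = u
    · subst huv
      simp [weightedLaplacian, hdiag]
    · simp [weightedLaplacian, huv]
  simp only [mulVec, dotProduct, h, mul_sub, Finset.sum_sub_distrib, Finset.sum_mul,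
    Finset.sum_ite_eq, Finset.mem_univ, if_true]

/-- Minimum principle: a function that is superharmonic off a nonempty set `T` and nonnegative
on `T` is nonnegative. -/
lemma nonneg_of_weightedLaplacian_mulVec_nonneg (hdiag : ∀ v, w v v = 0)
    (hsym : ∀ u v, w u v = w v u) (hnonneg : ∀ u v, 0 ≤ w u v)
    (hconn : (SimpleGraph.fromRel fun u v => 0 < w u v).Connected)
    {T : Finset V} (hT : T.Nonempty) {x : V → ℝ} (hxT : ∀ v ∈ T, 0 ≤ x v)
    (hx : ∀ v ∉ T, 0 ≤ (weightedLaplacian w *ᵥ x) v) (v : V) : 0 ≤ x v := by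
  obtain ⟨t, ht⟩ := hT
  have : Nonempty V := ⟨t⟩
  obtain ⟨m, hm⟩ := Finite.exists_min x
  by_contra! hv
  have hneg : x m < 0 := (hm v).trans_lt hv
  have hstep : ∀ a b, (SimpleGraph.fromRel fun u v => 0 < w u v).Adj a b →
      x a = x m → x b = x m := by
    intro a b hab ha
    have haT : a ∉ T := fun h => (hxT a h).not_gt (ha ▸ hneg)
    have hpos : 0 < w a b := by
      rcases ((SimpleGraph.fromRel_adj _ _ _).1 hab).2 with h | h
      · exact h
      · rwa [hsym]
    have hle : ∀ u ∈ Finset.univ, w a u * (x a - x u) ≤ 0 := fun u _ =>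
      mul_nonpos_of_nonneg_of_nonpos (hnonneg a u) (by linarith [hm u])
    have hsum : ∑ u, w a u * (x a - x u) = 0 :=
      le_antisymm (Finset.sum_nonpos hle) (weightedLaplacian_mulVec_apply hdiag x a ▸ hx a haT)
    have hb := (Finset.sum_eq_zero_iff_of_nonpos hle).1 hsum b (Finset.mem_univ b)
    rcases mul_eq_zero.1 hb with h | h
    · exact absurd h hpos.ne'
    · linarith
  have hwalk : ∀ a b, (SimpleGraph.fromRel fun u v => 0 < w u v).Walk a b →
      x a = x m → x b = x m := by
    intro a b p
    induction p with
    | nil => exact id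
    | cons hab _ ih => exact fun ha => ih (hstep _ _ hab ha)
  obtain ⟨p⟩ := hconn.preconnected m t
  exact (hxT t ht).not_gt (hwalk m t p rfl ▸ hneg)

/-- A vector with nonnegative image under the interior block of the Laplacian is nonnegative. -/
lemma nonneg_of_interior_mulVec_nonneg (hdiag : ∀ v, w v v = 0)
    (hsym : ∀ u v, w u v = w v u) (hnonneg : ∀ u v, 0 ≤ w u v)
    (hconn : (SimpleGraph.fromRel fun u v => 0 < w u v).Connected)
    {T : Finset V} (hT : T.Nonempty) {y : {v : V // v ∈ Tᶜ} → ℝ}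
    (hy : 0 ≤ (weightedLaplacian w).submatrix
      (fun x : {v : V // v ∈ Tᶜ} => (x : V)) (fun x : {v : V // v ∈ Tᶜ} => (x : V)) *ᵥ y) :
    0 ≤ y := by
  let x : V → ℝ := fun v => if h : v ∈ Tᶜ then y ⟨v, h⟩ else 0
  have hxy : ∀ i : {v : V // v ∈ Tᶜ}, x i = y i := fun i => dif_pos i.2
  have hxT : ∀ v ∈ T, x v = 0 := fun v hv => dif_neg (by simpa using hv)
  intro i
  rw [← hxy]
  refine nonneg_of_weightedLaplacian_mulVec_nonneg hdiag hsym hnonneg hconn hT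
    (fun v hv => (hxT v hv).ge) (fun v hv => ?_) i
  refine (hy ⟨v, Finset.mem_compl.2 hv⟩).trans_eq ?_
  simp only [mulVec, dotProduct, submatrix_apply, ← hxy]
  rw [Finset.sum_coe_sort Tᶜ (fun u => weightedLaplacian w v u * x u)]
  exact Finset.sum_subset (Finset.subset_univ _) fun u _ hu => by
    rw [hxT u (by simpa using hu), mul_zero]

lemma isUnit_det_interior (hdiag : ∀ v, w v v = 0)
    (hsym : ∀ u v, w u v = w v u) (hnonneg : ∀ u v, 0 ≤ w u v)
    (hconn : (SimpleGraph.fromRel fun u v => 0 < w u v).Connected)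
    {T : Finset V} (hT : T.Nonempty) :
    IsUnit ((weightedLaplacian w).submatrix (fun x : {v : V // v ∈ Tᶜ} => (x : V))
      (fun x : {v : V // v ∈ Tᶜ} => (x : V))).det := by
  rw [isUnit_iff_ne_zero]
  intro hdet
  obtain ⟨y, hy, hLy⟩ := exists_mulVec_eq_zero_iff.2 hdet
  refine hy (le_antisymm (neg_nonneg.1 ?_) ?_)
  · exact nonneg_of_interior_mulVec_nonneg hdiag hsym hnonneg hconn hT
      (by rw [mulVec_neg, hLy, neg_zero])
  · exact nonneg_of_interior_mulVec_nonneg hdiag hsym hnonneg hconn hT hLy.ge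

/-- Rows of the Laplacian, split into terminal and interior columns, sum to zero. -/
lemma sum_weightedLaplacian_terminal_add_interior (hdiag : ∀ v, w v v = 0) (T : Finset V) (v : V) :
    ∑ u : {v : V // v ∈ T}, weightedLaplacian w v u +
      ∑ u : {v : V // v ∈ Tᶜ}, weightedLaplacian w v u = 0 := by
  rw [Finset.sum_coe_sort T (weightedLaplacian w v),
    Finset.sum_coe_sort Tᶜ (weightedLaplacian w v), Finset.sum_add_sum_compl]
  simpa [mulVec, dotProduct] using weightedLaplacian_mulVec_apply hdiag (fun _ => 1) v

end WeightedLaplacian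

/-- Kron reduction: for a connected weighted graph with positive edge susceptances,
partition the vertices into a nonempty set `T` of terminals and the set `Tᶜ` of
interior vertices.  Then the interior block `L_II` is invertible, and the Schur
complement `L_red = L_TT − L_TI ⬝ L_II⁻¹ ⬝ L_IT` is symmetric, has zero row sums,
and has nonpositive off-diagonal entries — i.e. it is the weighted Laplacian of a
graph on `T` with nonnegative edge weights. -/
theorem kron_reduction_is_laplacian {V : Type*} [Fintype V] [DecidableEq V]
    (w : V → V → ℝ)
    (hsym : ∀ u v, w u v = w v u)
    (hdiag : ∀ v, w v v = 0)
    (hnonneg : ∀ u v, 0 ≤ w u v)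
    (hconn : (SimpleGraph.fromRel fun u v => 0 < w u v).Connected)
    (T : Finset V) (hT : T.Nonempty)
    (LTT : Matrix {v : V // v ∈ T} {v : V // v ∈ T} ℝ)
    (LTI : Matrix {v : V // v ∈ T} {v : V // v ∈ Tᶜ} ℝ)
    (LIT : Matrix {v : V // v ∈ Tᶜ} {v : V // v ∈ T} ℝ)
    (LII : Matrix {v : V // v ∈ Tᶜ} {v : V // v ∈ Tᶜ} ℝ)
    (hLTT : LTT = (weightedLaplacian w).submatrix
      (fun x : {v : V // v ∈ T} => (x : V)) (fun x : {v : V // v ∈ T} => (x : V)))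
    (hLTI : LTI = (weightedLaplacian w).submatrix
      (fun x : {v : V // v ∈ T} => (x : V)) (fun x : {v : V // v ∈ Tᶜ} => (x : V)))
    (hLIT : LIT = (weightedLaplacian w).submatrix
      (fun x : {v : V // v ∈ Tᶜ} => (x : V)) (fun x : {v : V // v ∈ T} => (x : V)))
    (hLII : LII = (weightedLaplacian w).submatrix
      (fun x : {v : V // v ∈ Tᶜ} => (x : V)) (fun x : {v : V // v ∈ Tᶜ} => (x : V))) :
    IsUnit LII.det ∧
    (LTT - LTI * LII⁻¹ * LIT).IsSymm ∧
    (∀ u, ∑ v, (LTT - LTI * LII⁻¹ * LIT) u v = 0) ∧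
    (∀ u v, u ≠ v → (LTT - LTI * LII⁻¹ * LIT) u v ≤ 0) := by
  have hdet : IsUnit LII.det := hLII ▸ isUnit_det_interior hdiag hsym hnonneg hconn hT
  have hL := weightedLaplacian_isSymm hsym
  refine ⟨hdet, ?_, fun u => ?_, fun u v huv => ?_⟩
  · have hTT : LTTᵀ = LTT := by rw [hLTT, transpose_submatrix, hL.eq]
    have hII : LIIᵀ = LII := by rw [hLII, transpose_submatrix, hL.eq]
    have hTI : LTIᵀ = LIT := by rw [hLTI, hLIT, transpose_submatrix, hL.eq]
    have hIT : LITᵀ = LTI := by rw [← hTI, transpose_transpose]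
    rw [IsSymm, transpose_sub, transpose_mul, transpose_mul, transpose_nonsing_inv, hTT, hII,
      hTI, hIT, Matrix.mul_assoc]
  · have hT1 : LTT *ᵥ 1 + LTI *ᵥ 1 = 0 := by
      ext t
      simpa [hLTT, hLTI, mulVec, dotProduct] using
        sum_weightedLaplacian_terminal_add_interior hdiag T t
    have hI1 : LIT *ᵥ 1 = -(LII *ᵥ 1) := by
      refine eq_neg_of_add_eq_zero_left ?_
      ext i
      simpa [hLIT, hLII, mulVec, dotProduct] using
        sum_weightedLaplacian_terminal_add_interior hdiag T i
    have hred : (LTT - LTI * LII⁻¹ * LIT) *ᵥ 1 = 0 := by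
      rw [sub_mulVec, ← mulVec_mulVec, hI1, mulVec_neg, mulVec_mulVec,
        nonsing_inv_mul_cancel_right _ _ hdet, sub_neg_eq_add, hT1]
    simpa [mulVec, dotProduct] using congrFun hred u
  · have hcol : 0 ≤ -((LII⁻¹ * LIT).col v) := by
      refine nonneg_of_interior_mulVec_nonneg hdiag hsym hnonneg hconn hT ?_
      rw [← hLII, mulVec_neg]
      intro i
      have hi : (LII *ᵥ (LII⁻¹ * LIT).col v) i = LIT i v := by
        change (LII * (LII⁻¹ * LIT)) i v = LIT i v
        rw [mul_nonsing_inv_cancel_left _ _ hdet]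
      have hne : (i : V) ≠ v := fun h => Finset.mem_compl.1 i.2 (h ▸ v.2)
      rw [Pi.neg_apply, hi, hLIT]
      exact neg_nonneg.2 (weightedLaplacian_apply_nonpos hnonneg hne)
    have hTT : LTT u v ≤ 0 := by
      rw [hLTT]
      exact weightedLaplacian_apply_nonpos hnonneg (Subtype.coe_injective.ne huv)
    have hprod : 0 ≤ (LTI * (LII⁻¹ * LIT)) u v := by
      rw [mul_apply]
      refine Finset.sum_nonneg fun i _ => mul_nonneg_of_nonpos_of_nonpos ?_ ?_
      · have hne : (u : V) ≠ i := fun h => Finset.mem_compl.1 i.2 (h ▸ u.2)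
        rw [hLTI]
        exact weightedLaplacian_apply_nonpos hnonneg hne
      · exact neg_nonneg.1 (hcol i)
    rw [Matrix.sub_apply, Matrix.mul_assoc]
    linarith
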